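/- Let A be a commutative unital K-algebra and L a (K, A)-Lie-Rinehart algebra. Then the exterior algebra ∧•_A L, equipped with the wedge product and the generalized Schouten–Nijenhuis bracket [D_1∧⋯∧D_m, D_{m+1}∧⋯∧D_n] = Σ_{i≤m<j} (−1)^{i+j+m} [D_i, D_j] ∧ D_1 ∧ ⋯ D̂_i ⋯ D̂_j ⋯ ∧ D_n (extended to degree 0 by the anchor), is a Gerstenhaber algebra over A. -/

import Mathlib

universe u

/-- A `(K, A)`-Lie-Rinehart algebra structure on an `A`-module `L`. -/
structure LieRinehart (K A L : Type u) [CommRing K] [CommRing A] [Algebra K A]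
    [AddCommGroup L] [Module A L] where
  bracket : L → L → L
  anchor : L →ₗ[A] Derivation K A A
  bracket_add_left : ∀ x y z : L, bracket (x + y) z = bracket x z + bracket y z
  bracket_add_right : ∀ x y z : L, bracket x (y + z) = bracket x y + bracket x z
  bracket_skew : ∀ x y : L, bracket x y = - bracket y x
  bracket_jacobi : ∀ x y z : L,
    bracket x (bracket y z) = bracket (bracket x y) z + bracket y (bracket x z)
  bracket_leibniz : ∀ (x : L) (a : A) (y : L),
    bracket x (a • y) = a • bracket x y + anchor x a • y
  anchor_bracket : ∀ (x y : L) (a : A),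
    anchor (bracket x y) a = anchor x (anchor y a) - anchor y (anchor x a)

/-- A morphism of `(K, A)`-Lie-Rinehart algebras. -/
structure LieRinehartHom {K A L L' : Type u} [CommRing K] [CommRing A] [Algebra K A]
    [AddCommGroup L] [Module A L] [AddCommGroup L'] [Module A L']
    (𝓛 : LieRinehart K A L) (𝓛' : LieRinehart K A L') where
  toFun : L →ₗ[A] L'
  map_bracket : ∀ x y, toFun (𝓛.bracket x y) = 𝓛'.bracket (toFun x) (toFun y)
  map_anchor : ∀ x, 𝓛'.anchor (toFun x) = 𝓛.anchor x

/-- The sign `(-1)^e` for `e : ℤ`. -/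
def sgnz (e : ℤ) : ℤˣ := (-1 : ℤˣ) ^ e

/-- A Gerstenhaber algebra structure on the exterior algebra `∧•_A L` of a Lie-Rinehart
algebra `L`, whose bracket is the generalized Schouten–Nijenhuis bracket: it extends the Lie
bracket of `L` and the action `[D, f] = ρ(D)(f)` of the anchor, is of degree `-1` with respect
to the exterior grading, and satisfies the graded Leibniz rule with respect to the wedge
product, graded skew-symmetry and the graded Jacobi identity. -/
structure SchoutenBracket {K A L : Type u} [CommRing K] [CommRing A] [Algebra K A]
    [AddCommGroup L] [Module A L] (𝓛 : LieRinehart K A L) where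
  Br : ExteriorAlgebra A L → ExteriorAlgebra A L → ExteriorAlgebra A L
  add_left : ∀ x y z, Br (x + y) z = Br x z + Br y z
  add_right : ∀ x y z, Br x (y + z) = Br x y + Br x z
  degree : ∀ (i j : ℕ) (x y : ExteriorAlgebra A L),
    x ∈ ⋀[A]^i L → y ∈ ⋀[A]^j L → Br x y ∈ ⋀[A]^(i + j - 1) L
  on_gen : ∀ D D' : L,
    Br (ExteriorAlgebra.ι A D) (ExteriorAlgebra.ι A D') = ExteriorAlgebra.ι A (𝓛.bracket D D')
  on_scalar : ∀ (D : L) (f : A),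
    Br (ExteriorAlgebra.ι A D) (algebraMap A (ExteriorAlgebra A L) f) =
      algebraMap A (ExteriorAlgebra A L) (𝓛.anchor D f)
  leibniz : ∀ (i j : ℕ) (a b c : ExteriorAlgebra A L), a ∈ ⋀[A]^i L → b ∈ ⋀[A]^j L →
    Br a (b * c) = Br a b * c + sgnz (((i : ℤ) - 1) * j) • (b * Br a c)
  skew : ∀ (i j : ℕ) (a b : ExteriorAlgebra A L), a ∈ ⋀[A]^i L → b ∈ ⋀[A]^j L →
    Br a b = -(sgnz (((i : ℤ) - 1) * ((j : ℤ) - 1)) • Br b a)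
  jacobi : ∀ (i j : ℕ) (a b c : ExteriorAlgebra A L), a ∈ ⋀[A]^i L → b ∈ ⋀[A]^j L →
    Br a (Br b c) = Br (Br a b) c + sgnz (((i : ℤ) - 1) * ((j : ℤ) - 1)) • Br b (Br a c)

theorem sgnz_add (a b : ℤ) : sgnz (a + b) = sgnz a * sgnz b := zpow_add _ _ _

theorem sgnz_of_even {e : ℤ} (h : Even e) : sgnz e = 1 := h.neg_one_zpow

theorem sgnz_of_not_even {e : ℤ} (h : ¬ Even e) : sgnz e = -1 :=
  (Int.not_even_iff_odd.1 h).neg_one_zpow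

theorem sgnz_eq_of_even_iff {a b : ℤ} (h : Even a ↔ Even b) : sgnz a = sgnz b := by
  by_cases ha : Even a
  · rw [sgnz_of_even ha, sgnz_of_even (h.1 ha)]
  · rw [sgnz_of_not_even ha, sgnz_of_not_even (mt h.2 ha)]

theorem sgnz_zero : sgnz 0 = 1 := zpow_zero _

theorem sgnz_add_one (a : ℤ) : sgnz (a + 1) = -sgnz a := by
  rw [sgnz_add, sgnz_of_not_even (e := 1) (by simp), mul_neg_one]

theorem sgnz_sub_one (a : ℤ) : sgnz (a - 1) = -sgnz a := by
  rw [← neg_neg (sgnz (a - 1)), ← sgnz_add_one, sub_add_cancel]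

namespace ExteriorAlgebra

variable {A L : Type*} [CommRing A] [AddCommGroup L] [Module A L]

/-- The `p`-th power of the grade involution of the exterior algebra. -/
noncomputable def parity (p : ℤ) : ExteriorAlgebra A L →ₐ[A] ExteriorAlgebra A L :=
  open Classical in if Even p then AlgHom.id A _ else CliffordAlgebra.involute

theorem parity_ι (p : ℤ) (x : L) : parity p (ι A x) = sgnz p • ι A x := by
  by_cases h : Even p
  · simp [parity, h, sgnz_of_even h]
  · simp only [parity, if_neg h, sgnz_of_not_even h]
    exact (CliffordAlgebra.involute_ι x).trans (by simp)

/-- `u` has the parity of `n`: the grade involution multiplies it by `(-1) ^ n`. -/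
def HasParity (n : ℤ) (u : ExteriorAlgebra A L) : Prop :=
  CliffordAlgebra.involute u = sgnz n • u

theorem map_sgnz_smul {M N : Type*} [AddCommGroup M] [AddCommGroup N] (D : M → N)
    (hD : ∀ b c, D (b + c) = D b + D c) (e : ℤ) (b : M) : D (sgnz e • b) = sgnz e • D b := by
  by_cases h : Even e
  · simp [sgnz_of_even h]
  · simpa [sgnz_of_not_even h] using map_neg (AddMonoidHom.mk' D hD) b

namespace HasParity

theorem algebraMap (f : A) : HasParity 0 (algebraMap A (ExteriorAlgebra A L) f) := by
  rw [HasParity, AlgHom.commutes, sgnz_zero, one_smul]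

theorem ι (x : L) : HasParity 1 (ι A x) :=
  (CliffordAlgebra.involute_ι x).trans (by simp [sgnz])

variable {m n : ℤ} {u v : ExteriorAlgebra A L}

theorem zero : HasParity n (0 : ExteriorAlgebra A L) := by
  simp [HasParity]

theorem add (hu : HasParity n u) (hv : HasParity n v) : HasParity n (u + v) := by
  rw [HasParity, map_add, hu, hv, smul_add]

theorem neg (hu : HasParity n u) : HasParity n (-u) := by
  rw [HasParity, map_neg, hu, smul_neg]

theorem sgnz_smul (hu : HasParity n u) (e : ℤ) : HasParity n (sgnz e • u) := by
  rw [HasParity, map_sgnz_smul _ (map_add _), hu, smul_comm]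

theorem mul (hu : HasParity m u) (hv : HasParity n v) : HasParity (m + n) (u * v) := by
  rw [HasParity, map_mul, hu, hv, smul_mul_smul_comm, sgnz_add]

theorem of_mem_exteriorPower {k : ℕ} (hu : u ∈ ⋀[A]^k L) : HasParity k u := by
  induction hu using Submodule.pow_induction_on_left' with
  | algebraMap r => exact algebraMap r
  | add x y i _ _ hx hy => exact hx.add hy
  | mem_mul x hx i y _ hy =>
    obtain ⟨x, rfl⟩ := hx
    rw [Nat.cast_succ, add_comm]
    exact (HasParity.ι x).mul hy

theorem parity_eq (hu : HasParity n u) (p : ℤ) : parity p u = sgnz (p * n) • u := by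
  by_cases h : Even p
  · simp [parity, h, sgnz_of_even (h.mul_right n)]
  · rw [parity, if_neg h, hu]
    congr 1
    apply sgnz_eq_of_even_iff
    simp [Int.even_mul, h]

theorem mul_ι (u : ExteriorAlgebra A L) (x : L) :
    u * ExteriorAlgebra.ι A x = ExteriorAlgebra.ι A x * CliffordAlgebra.involute u := by
  induction u using ExteriorAlgebra.induction with
  | algebraMap r => rw [AlgHom.commutes, Algebra.commutes]
  | ι y =>
    refine Eq.trans ?_ (congrArg _ (CliffordAlgebra.involute_ι y).symm)
    rw [mul_neg]
    exact eq_neg_of_add_eq_zero_left (ι_add_mul_swap y x)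
  | mul a b ha hb => rw [mul_assoc, hb, ← mul_assoc, ha, mul_assoc, map_mul]
  | add a b ha hb => rw [add_mul, ha, hb, map_add, mul_add]

/-- Graded commutativity of the wedge product. -/
theorem mul_comm (hu : HasParity n u) (b : ExteriorAlgebra A L) : u * b = parity n b * u := by
  induction b using ExteriorAlgebra.induction with
  | algebraMap r => rw [AlgHom.commutes, Algebra.commutes]
  | ι y => rw [mul_ι, hu, parity_ι, mul_smul_comm, smul_mul_assoc]
  | mul a b ha hb => rw [← mul_assoc, ha, mul_assoc, hb, ← mul_assoc, map_mul]
  | add a b ha hb => rw [mul_add, ha, hb, map_add, add_mul]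

end HasParity

/-- `D` is a graded derivation of the exterior algebra whose degree has the parity of `p`. -/
structure IsGradedDerivation (p : ℤ) (D : ExteriorAlgebra A L → ExteriorAlgebra A L) : Prop where
  map_add : ∀ b c, D (b + c) = D b + D c
  map_mul : ∀ b c, D (b * c) = D b * c + parity p b * D c
  involute : ∀ b, CliffordAlgebra.involute (D b) = sgnz p • D (CliffordAlgebra.involute b)

namespace IsGradedDerivation

variable {p q : ℤ} {D D' : ExteriorAlgebra A L → ExteriorAlgebra A L}

theorem zero : IsGradedDerivation p (fun _ => (0 : ExteriorAlgebra A L)) := by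
  constructor <;> simp

theorem map_zero (h : IsGradedDerivation p D) : D 0 = 0 :=
  _root_.map_zero (AddMonoidHom.mk' D h.map_add)

theorem map_neg (h : IsGradedDerivation p D) (b : ExteriorAlgebra A L) : D (-b) = -D b :=
  _root_.map_neg (AddMonoidHom.mk' D h.map_add) b

theorem map_sub (h : IsGradedDerivation p D) (b c : ExteriorAlgebra A L) :
    D (b - c) = D b - D c :=
  _root_.map_sub (AddMonoidHom.mk' D h.map_add) b c

theorem map_smul_sgnz (h : IsGradedDerivation p D) (e : ℤ) (b : ExteriorAlgebra A L) :
    D (sgnz e • b) = sgnz e • D b :=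
  map_sgnz_smul D h.map_add e b

theorem hasParity (h : IsGradedDerivation p D) {n : ℤ} {b : ExteriorAlgebra A L}
    (hb : HasParity n b) : HasParity (p + n) (D b) := by
  rw [HasParity, h.involute, hb, h.map_smul_sgnz, smul_smul, sgnz_add]

theorem add (h : IsGradedDerivation p D) (h' : IsGradedDerivation p D') :
    IsGradedDerivation p (fun b => D b + D' b) where
  map_add b c := by rw [h.map_add, h'.map_add]; abel
  map_mul b c := by rw [h.map_mul, h'.map_mul, add_mul, mul_add]; abel
  involute b := by rw [_root_.map_add, h.involute, h'.involute, smul_add]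

theorem neg (h : IsGradedDerivation p D) : IsGradedDerivation p (fun b => -D b) where
  map_add b c := by rw [h.map_add]; abel
  map_mul b c := by rw [h.map_mul, neg_mul, mul_neg]; abel
  involute b := by rw [_root_.map_neg, h.involute, smul_neg]

theorem sgnz_smul (h : IsGradedDerivation p D) (e : ℤ) :
    IsGradedDerivation p (fun b => sgnz e • D b) := by
  by_cases he : Even e
  · simpa [sgnz_of_even he] using h
  · simpa [sgnz_of_not_even he] using h.neg

theorem mul_left (h : IsGradedDerivation p D) {n : ℤ} {u : ExteriorAlgebra A L}
    (hu : HasParity n u) : IsGradedDerivation (n + p) (fun b => u * D b) where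
  map_add b c := by rw [h.map_add, mul_add]
  map_mul b c := by
    have key : u * parity p b = parity (n + p) b * u := by
      rw [hu.mul_comm]
      congr 1
      by_cases hn : Even n <;> by_cases hp : Even p <;>
        simp [parity, hn, hp, Int.even_add]
    rw [h.map_mul, mul_add, mul_assoc, ← mul_assoc u (parity p b), key, mul_assoc]
  involute b := by rw [_root_.map_mul, hu, h.involute, smul_mul_smul_comm, sgnz_add]

theorem parity_apply (h : IsGradedDerivation p D) (n : ℤ) (b : ExteriorAlgebra A L) :
    parity n (D b) = sgnz (n * p) • D (parity n b) := by
  by_cases hn : Even n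
  · simp [parity, hn, sgnz_of_even (hn.mul_right p)]
  · rw [parity, if_neg hn, h.involute]
    congr 1
    apply sgnz_eq_of_even_iff
    simp [Int.even_mul, hn]

theorem parity_parity (n m : ℤ) (b : ExteriorAlgebra A L) :
    parity n (parity m b) = parity (n + m) b := by
  by_cases hn : Even n <;> by_cases hm : Even m <;> simp [parity, hn, hm, Int.even_add]

theorem commutator (h : IsGradedDerivation p D) (h' : IsGradedDerivation q D') :
    IsGradedDerivation (p + q) (fun b => D (D' b) - sgnz (p * q) • D' (D b)) where
  map_add b c := by
    rw [h'.map_add, h.map_add, h.map_add, h'.map_add, smul_add]; abel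
  map_mul b c := by
    rw [h'.map_mul, h.map_add, h.map_mul, h.map_mul, h.map_mul, h'.map_add, h'.map_mul,
      h'.map_mul, h.parity_apply, h'.parity_apply, parity_parity, parity_parity]
    simp only [smul_add, sub_mul, mul_sub, smul_mul_assoc, mul_smul_comm, smul_smul, add_comm q p,
      mul_comm q p]
    rw [Int.units_mul_self, one_smul]
    abel
  involute b := by
    rw [_root_.map_sub, h.involute, h'.involute, map_sgnz_smul _ (_root_.map_add _), h'.involute,
      h.involute, h.map_smul_sgnz, h'.map_smul_sgnz, smul_sub, sgnz_add]
    simp only [smul_smul, mul_comm, mul_left_comm]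

theorem ext (h : IsGradedDerivation p D) (h' : IsGradedDerivation p D')
    (h₀ : ∀ f : A, D (algebraMap A _ f) = D' (algebraMap A _ f))
    (h₁ : ∀ x, D (ι A x) = D' (ι A x)) (b : ExteriorAlgebra A L) : D b = D' b := by
  induction b using ExteriorAlgebra.induction with
  | algebraMap r => exact h₀ r
  | ι y => exact h₁ y
  | mul a b ha hb => rw [h.map_mul, h'.map_mul, ha, hb]
  | add a b ha hb => rw [h.map_add, h'.map_add, ha, hb]

end IsGradedDerivation

/-- Matrices `!![parity p b, c; 0, b]`; graded derivations are ring homomorphisms to this ring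
splitting the projection to `b`. -/
def gradedDualNumbers (p : ℤ) : Subring (Matrix (Fin 2) (Fin 2) (ExteriorAlgebra A L)) where
  carrier := {m | m 1 0 = 0 ∧ m 0 0 = parity p (m 1 1)}
  mul_mem' := by
    rintro a b ⟨ha, ha'⟩ ⟨hb, hb'⟩
    simp [Matrix.mul_apply, Fin.sum_univ_two, ha, ha', hb, hb']
  one_mem' := by simp
  add_mem' := by
    rintro a b ⟨ha, ha'⟩ ⟨hb, hb'⟩
    simp [ha, ha', hb, hb']
  zero_mem' := by simp
  neg_mem' := by
    rintro a ⟨ha, ha'⟩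
    simp [ha, ha']

namespace gradedDualNumbers

variable {p : ℤ}

/-- The matrix `!![parity p b, c; 0, b]`. -/
noncomputable def mk (p : ℤ) (b c : ExteriorAlgebra A L) :
    gradedDualNumbers (A := A) (L := L) p :=
  ⟨!![parity p b, c; 0, b], by simp [gradedDualNumbers]⟩

theorem ext {m m' : gradedDualNumbers (A := A) (L := L) p} (h : m.1 1 1 = m'.1 1 1)
    (h' : m.1 0 1 = m'.1 0 1) : m = m' := by
  obtain ⟨m, hm, hm'⟩ := m
  obtain ⟨m', hn, hn'⟩ := m'
  ext i j
  fin_cases i <;> fin_cases j <;> simp_all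

theorem mul_one_one (m m' : gradedDualNumbers (A := A) (L := L) p) :
    (m * m').1 1 1 = m.1 1 1 * m'.1 1 1 := by
  have := m.2.1
  simp [Matrix.mul_apply, Fin.sum_univ_two, this]

theorem mul_zero_one (m m' : gradedDualNumbers (A := A) (L := L) p) :
    (m * m').1 0 1 = m.1 0 1 * m'.1 1 1 + parity p (m.1 1 1) * m'.1 0 1 := by
  have := m.2.2
  simp [Matrix.mul_apply, Fin.sum_univ_two, this, add_comm]

end gradedDualNumbers

open gradedDualNumbers in
theorem exists_isGradedDerivation (p : ℤ) (d₀ : A → ExteriorAlgebra A L)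
    (d₁ : L → ExteriorAlgebra A L)
    (h₀_add : ∀ f g, d₀ (f + g) = d₀ f + d₀ g)
    (h₀_mul : ∀ f g, d₀ (f * g) = f • d₀ g + g • d₀ f)
    (h₀ : ∀ f, HasParity p (d₀ f))
    (h₁_add : ∀ x y, d₁ (x + y) = d₁ x + d₁ y)
    (h₁_smul : ∀ (f : A) x, d₁ (f • x) = f • d₁ x + d₀ f * ι A x)
    (h₁ : ∀ x, HasParity (p + 1) (d₁ x)) :
    ∃ D : ExteriorAlgebra A L → ExteriorAlgebra A L, IsGradedDerivation p D ∧
      (∀ f, D (algebraMap A _ f) = d₀ f) ∧ ∀ x, D (ι A x) = d₁ x := by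
  have h₀_one : d₀ 1 = 0 := by simpa using h₀_mul 1 1
  have h₀_zero : d₀ 0 = 0 := by simpa using h₀_add 0 0
  let φ : A →+* gradedDualNumbers (A := A) (L := L) p :=
    { toFun := fun f => mk p (algebraMap A _ f) (d₀ f)
      map_one' := by apply gradedDualNumbers.ext <;> simp [mk, h₀_one]
      map_zero' := by apply gradedDualNumbers.ext <;> simp [mk, h₀_zero]
      map_add' := fun f g => by apply gradedDualNumbers.ext <;> simp [mk, h₀_add]
      map_mul' := fun f g => by
        apply gradedDualNumbers.ext
        · rw [mul_one_one]; simp [mk]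
        · rw [mul_zero_one]
          simp [mk, h₀_mul, Algebra.smul_def, ← Algebra.commutes g, add_comm] }
  let : Algebra A (gradedDualNumbers (A := A) (L := L) p) := φ.toAlgebra' fun f m => by
    apply gradedDualNumbers.ext
    · rw [mul_one_one, mul_one_one]
      exact Algebra.commutes f _
    · rw [mul_zero_one, mul_zero_one]
      simp [φ, mk, (h₀ f).mul_comm (m.1 1 1), Algebra.commutes f, add_comm]
  have smul_one_one (f : A) (m : gradedDualNumbers (A := A) (L := L) p) :
      (f • m).1 1 1 = f • m.1 1 1 := by
    rw [Algebra.smul_def, mul_one_one, Algebra.smul_def]; rfl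
  let ψ : L →ₗ[A] gradedDualNumbers (A := A) (L := L) p :=
    { toFun := fun x => mk p (ι A x) (d₁ x)
      map_add' := fun x y => by apply gradedDualNumbers.ext <;> simp [mk, h₁_add]
      map_smul' := fun f x => by
        apply gradedDualNumbers.ext
        · rw [RingHom.id_apply, smul_one_one]; simp [mk]
        · rw [RingHom.id_apply, Algebra.smul_def, mul_zero_one]
          change d₁ (f • x) = d₀ f * ι A x + parity p (algebraMap A _ f) * d₁ x
          rw [h₁_smul, AlgHom.commutes, ← Algebra.smul_def, add_comm] }
  have hψ (x : L) : ψ x * ψ x = 0 := by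
    apply gradedDualNumbers.ext
    · rw [mul_one_one]
      exact ι_sq_zero x
    · rw [mul_zero_one]
      change d₁ x * ι A x + parity p (ι A x) * d₁ x = 0
      rw [(h₁ x).mul_comm, parity_ι, parity_ι, sgnz_add_one]
      simp
  let Φ := ExteriorAlgebra.lift A ⟨ψ, hψ⟩
  let π : gradedDualNumbers (A := A) (L := L) p →ₐ[A] ExteriorAlgebra A L :=
    { toFun := fun m => m.1 1 1
      map_one' := by simp
      map_zero' := by simp
      map_add' := fun _ _ => by simp
      map_mul' := mul_one_one
      commutes' := fun _ => rfl }
  have hΦ (b : ExteriorAlgebra A L) : (Φ b).1 1 1 = b := by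
    have : π.comp Φ = AlgHom.id A _ := by
      ext x
      change (Φ (ι A x)).1 1 1 = ι A x
      simp [Φ, ψ, mk]
    exact DFunLike.congr_fun this b
  have hf (f : A) : (Φ (algebraMap A _ f)).1 0 1 = d₀ f := by
    rw [AlgHom.commutes]; rfl
  have hx (x : L) : (Φ (ι A x)).1 0 1 = d₁ x := by
    simp [Φ, ψ, mk]
  have hadd (b c : ExteriorAlgebra A L) :
      (Φ (b + c)).1 0 1 = (Φ b).1 0 1 + (Φ c).1 0 1 := by simp
  have hmul (b c : ExteriorAlgebra A L) :
      (Φ (b * c)).1 0 1 = (Φ b).1 0 1 * c + parity p b * (Φ c).1 0 1 := by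
    rw [map_mul, mul_zero_one, hΦ, hΦ]
  refine ⟨fun b => (Φ b).1 0 1, ⟨hadd, hmul, fun b => ?_⟩, hf, hx⟩
  induction b using ExteriorAlgebra.induction with
  | algebraMap r => rw [AlgHom.commutes CliffordAlgebra.involute, hf]; exact h₀ r
  | ι y =>
    have : CliffordAlgebra.involute (ι A y) = -ι A y := CliffordAlgebra.involute_ι y
    rw [hx, h₁ y, this, sgnz_add_one]
    simp [-map_neg, hx y, map_neg Φ]
  | mul a b ha hb =>
    have hp : CliffordAlgebra.involute (parity p a) = parity p (CliffordAlgebra.involute a) := by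
      by_cases h : Even p <;> simp [parity, h]
    rw [hmul, map_add, map_mul, map_mul, ha, hb, map_mul, hmul, hp, smul_add, smul_mul_assoc,
      mul_smul_comm]
  | add a b ha hb => rw [hadd, map_add, ha, hb, map_add, hadd, smul_add]

variable (A L) in
/-- The multivectors of degree `n - 1`; zero for `n = 0`. -/
def shiftedPower : ℕ → Submodule A (ExteriorAlgebra A L)
  | 0 => ⊥
  | n + 1 => ⋀[A]^n L

theorem shiftedPower_le (n : ℕ) : shiftedPower A L n ≤ ⋀[A]^(n - 1) L := by
  cases n with
  | zero => exact bot_le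
  | succ n => exact le_rfl

theorem sgnz_smul_mem (S : Submodule A (ExteriorAlgebra A L)) {e : ℤ} {u : ExteriorAlgebra A L}
    (hu : u ∈ S) : sgnz e • u ∈ S := by
  by_cases he : Even e
  · simpa [sgnz_of_even he] using hu
  · simpa [sgnz_of_not_even he] using hu

theorem algebraMap_mem_shiftedPower (f : A) :
    algebraMap A (ExteriorAlgebra A L) f ∈ shiftedPower A L 1 := by
  change _ ∈ (ι A).range ^ 0
  rw [pow_zero]
  exact Submodule.algebraMap_mem f

theorem ι_mul_mem_shiftedPower (x : L) {n : ℕ} {u : ExteriorAlgebra A L}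
    (hu : u ∈ shiftedPower A L n) : ι A x * u ∈ shiftedPower A L (n + 1) := by
  cases n with
  | zero => simp [(Submodule.mem_bot A).1 hu]
  | succ n =>
    change _ ∈ (ι A).range ^ (n + 1)
    rw [pow_succ']
    exact Submodule.mul_mem_mul (LinearMap.mem_range_self _ x) hu

theorem mul_mem_shiftedPower {m n : ℕ} {u v : ExteriorAlgebra A L}
    (hu : u ∈ shiftedPower A L m) (hv : v ∈ ⋀[A]^n L) : u * v ∈ shiftedPower A L (m + n) := by
  cases m with
  | zero => simp [(Submodule.mem_bot A).1 hu]
  | succ m =>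
    rw [add_right_comm]
    change _ ∈ (ι A).range ^ (m + n)
    rw [pow_add]
    exact Submodule.mul_mem_mul hu hv

theorem IsGradedDerivation.mem_shiftedPower {p : ℤ}
    {D : ExteriorAlgebra A L → ExteriorAlgebra A L} (h : IsGradedDerivation p D) {m : ℕ}
    (h₀ : ∀ f, D (algebraMap A _ f) ∈ shiftedPower A L m)
    (h₁ : ∀ x, D (ι A x) ∈ shiftedPower A L (m + 1)) {n : ℕ} {b : ExteriorAlgebra A L}
    (hb : b ∈ ⋀[A]^n L) : D b ∈ shiftedPower A L (m + n) := by
  induction hb using Submodule.pow_induction_on_left' with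
  | algebraMap f => exact h₀ f
  | add x y i _ _ hx hy => rw [h.map_add]; exact add_mem hx hy
  | mem_mul x hx i y hy ih =>
    obtain ⟨x, rfl⟩ := hx
    rw [h.map_mul, parity_ι, smul_mul_assoc]
    refine add_mem ?_ (sgnz_smul_mem _ (ι_mul_mem_shiftedPower x ih))
    rw [Nat.succ_eq_add_one, ← add_assoc, add_right_comm]
    exact mul_mem_shiftedPower (h₁ x) hy

end ExteriorAlgebra

namespace LieRinehart

open ExteriorAlgebra

variable {K A L : Type u} [CommRing K] [CommRing A] [Algebra K A] [AddCommGroup L] [Module A L]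
  (𝓛 : LieRinehart K A L)

theorem exists_contraction (f : A) :
    ∃ D : ExteriorAlgebra A L → ExteriorAlgebra A L, IsGradedDerivation (-1) D ∧
      (∀ g, D (algebraMap A _ g) = 0) ∧ ∀ x, D (ι A x) = algebraMap A _ (𝓛.anchor x f) :=
  exists_isGradedDerivation (-1) (fun _ => 0) (fun x => algebraMap A _ (𝓛.anchor x f))
    (by simp) (by simp) (fun _ => .zero) (by simp) (by simp [Algebra.smul_def])
    (fun _ => .algebraMap _)

/-- Contraction of multivectors with the differential of `f`. -/
noncomputable def contraction (f : A) : ExteriorAlgebra A L → ExteriorAlgebra A L :=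
  (𝓛.exists_contraction f).choose

theorem isGradedDerivation_contraction (f : A) : IsGradedDerivation (-1) (𝓛.contraction f) :=
  (𝓛.exists_contraction f).choose_spec.1

theorem contraction_algebraMap (f g : A) : 𝓛.contraction f (algebraMap A _ g) = 0 :=
  (𝓛.exists_contraction f).choose_spec.2.1 g

theorem contraction_ι (f : A) (x : L) :
    𝓛.contraction f (ι A x) = algebraMap A _ (𝓛.anchor x f) :=
  (𝓛.exists_contraction f).choose_spec.2.2 x

theorem exists_lieDerivative (x : L) :
    ∃ D : ExteriorAlgebra A L → ExteriorAlgebra A L, IsGradedDerivation 0 D ∧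
      (∀ g, D (algebraMap A _ g) = algebraMap A _ (𝓛.anchor x g)) ∧
      ∀ y, D (ι A y) = ι A (𝓛.bracket x y) :=
  exists_isGradedDerivation 0 (fun g => algebraMap A _ (𝓛.anchor x g))
    (fun y => ι A (𝓛.bracket x y)) (by simp) (by simp [Algebra.smul_def])
    (fun _ => .algebraMap _) (by simp [𝓛.bracket_add_right])
    (by simp [𝓛.bracket_leibniz, Algebra.smul_def]) (fun _ => .ι _)

/-- The Lie derivative of multivectors along `x`. -/
noncomputable def lieDerivative (x : L) : ExteriorAlgebra A L → ExteriorAlgebra A L :=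
  (𝓛.exists_lieDerivative x).choose

theorem isGradedDerivation_lieDerivative (x : L) : IsGradedDerivation 0 (𝓛.lieDerivative x) :=
  (𝓛.exists_lieDerivative x).choose_spec.1

theorem lieDerivative_algebraMap (x : L) (g : A) :
    𝓛.lieDerivative x (algebraMap A _ g) = algebraMap A _ (𝓛.anchor x g) :=
  (𝓛.exists_lieDerivative x).choose_spec.2.1 g

theorem lieDerivative_ι (x y : L) : 𝓛.lieDerivative x (ι A y) = ι A (𝓛.bracket x y) :=
  (𝓛.exists_lieDerivative x).choose_spec.2.2 y

theorem contraction_add (f g : A) (b : ExteriorAlgebra A L) :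
    𝓛.contraction (f + g) b = 𝓛.contraction f b + 𝓛.contraction g b :=
  (𝓛.isGradedDerivation_contraction _).ext
    ((𝓛.isGradedDerivation_contraction f).add (𝓛.isGradedDerivation_contraction g))
    (by simp [contraction_algebraMap]) (by simp [contraction_ι]) b

theorem contraction_mul (f g : A) (b : ExteriorAlgebra A L) :
    𝓛.contraction (f * g) b = f • 𝓛.contraction g b + g • 𝓛.contraction f b := by
  have h (f g : A) := (𝓛.isGradedDerivation_contraction g).mul_left
    (HasParity.algebraMap (L := L) f)
  simp only [zero_add] at h
  simp only [Algebra.smul_def]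
  exact (𝓛.isGradedDerivation_contraction _).ext ((h f g).add (h g f))
    (by simp [contraction_algebraMap]) (by simp [contraction_ι]) b

theorem lieDerivative_add (x y : L) (b : ExteriorAlgebra A L) :
    𝓛.lieDerivative (x + y) b = 𝓛.lieDerivative x b + 𝓛.lieDerivative y b :=
  (𝓛.isGradedDerivation_lieDerivative _).ext
    ((𝓛.isGradedDerivation_lieDerivative x).add (𝓛.isGradedDerivation_lieDerivative y))
    (by simp [lieDerivative_algebraMap]) (by simp [lieDerivative_ι, 𝓛.bracket_add_left]) b

theorem bracket_smul_left (f : A) (x y : L) :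
    𝓛.bracket (f • x) y = f • 𝓛.bracket x y - 𝓛.anchor y f • x := by
  rw [𝓛.bracket_skew, 𝓛.bracket_leibniz, 𝓛.bracket_skew y x, smul_neg]
  abel

theorem lieDerivative_smul (f : A) (x : L) (b : ExteriorAlgebra A L) :
    𝓛.lieDerivative (f • x) b = f • 𝓛.lieDerivative x b - ι A x * 𝓛.contraction f b := by
  have h := (𝓛.isGradedDerivation_lieDerivative x).mul_left (HasParity.algebraMap (L := L) f)
  have h' := ((𝓛.isGradedDerivation_contraction f).mul_left (HasParity.ι x)).neg
  simp only [zero_add, add_neg_cancel] at h h'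
  rw [Algebra.smul_def, sub_eq_add_neg]
  exact (𝓛.isGradedDerivation_lieDerivative _).ext (h.add h')
    (by simp [contraction_algebraMap, lieDerivative_algebraMap])
    (by simp [contraction_ι, lieDerivative_ι, bracket_smul_left, Algebra.smul_def,
      Algebra.commutes, sub_eq_add_neg]) b

theorem lieDerivative_contraction (x : L) (f : A) (b : ExteriorAlgebra A L) :
    𝓛.lieDerivative x (𝓛.contraction f b) =
      𝓛.contraction f (𝓛.lieDerivative x b) + 𝓛.contraction (𝓛.anchor x f) b := by
  have h := (𝓛.isGradedDerivation_lieDerivative x).commutator (𝓛.isGradedDerivation_contraction f)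
  simp only [zero_add, zero_mul, sgnz_zero, one_smul] at h
  rw [add_comm, ← sub_eq_iff_eq_add]
  refine h.ext (𝓛.isGradedDerivation_contraction _) ?_ ?_ b
  · intro g
    simp [contraction_algebraMap, lieDerivative_algebraMap,
      (𝓛.isGradedDerivation_lieDerivative x).map_zero]
  · intro y
    simp only [contraction_ι, lieDerivative_ι, lieDerivative_algebraMap, 𝓛.anchor_bracket, map_sub]
    abel

theorem lieDerivative_bracket (x y : L) (b : ExteriorAlgebra A L) :
    𝓛.lieDerivative (𝓛.bracket x y) b =
      𝓛.lieDerivative x (𝓛.lieDerivative y b) - 𝓛.lieDerivative y (𝓛.lieDerivative x b) := by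
  have h := (𝓛.isGradedDerivation_lieDerivative x).commutator
    (𝓛.isGradedDerivation_lieDerivative y)
  simp only [zero_add, zero_mul, sgnz_zero, one_smul] at h
  refine (𝓛.isGradedDerivation_lieDerivative _).ext h ?_ ?_ b
  · intro g
    simp [lieDerivative_algebraMap, 𝓛.anchor_bracket]
  · intro z
    simp [lieDerivative_ι, 𝓛.bracket_jacobi x y z]

theorem contraction_contraction (f g : A) (b : ExteriorAlgebra A L) :
    𝓛.contraction f (𝓛.contraction g b) = -𝓛.contraction g (𝓛.contraction f b) := by
  have h := (𝓛.isGradedDerivation_contraction f).commutator (𝓛.isGradedDerivation_contraction g)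
  have := h.ext .zero
    (by simp [contraction_algebraMap, (𝓛.isGradedDerivation_contraction _).map_zero])
    (by simp [contraction_ι, contraction_algebraMap]) b
  rw [sgnz_of_not_even (by decide), Units.neg_smul, one_smul, sub_neg_eq_add] at this
  exact eq_neg_of_add_eq_zero_left this

/-- `D` is the Schouten bracket with `a`, where `a` has the parity of `p + 1`. -/
structure IsAd (p : ℤ) (a : ExteriorAlgebra A L)
    (D : ExteriorAlgebra A L → ExteriorAlgebra A L) : Prop where
  isGradedDerivation : IsGradedDerivation p D
  map_algebraMap : ∀ f, D (algebraMap A _ f) = sgnz p • 𝓛.contraction f a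
  map_ι : ∀ x, D (ι A x) = -𝓛.lieDerivative x a

theorem exists_isAd {p : ℤ} {a : ExteriorAlgebra A L} (ha : HasParity (p + 1) a) :
    ∃ D, 𝓛.IsAd p a D := by
  have hc (f : A) : HasParity p (𝓛.contraction f a) := by
    simpa using (𝓛.isGradedDerivation_contraction f).hasParity ha
  obtain ⟨D, hD, hD₀, hD₁⟩ := exists_isGradedDerivation p (fun f => sgnz p • 𝓛.contraction f a)
    (fun x => -𝓛.lieDerivative x a)
    (fun f g => by rw [contraction_add, smul_add])
    (fun f g => by rw [contraction_mul, smul_add, smul_comm, smul_comm (sgnz p) g])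
    (fun f => (hc f).sgnz_smul p)
    (fun x y => by rw [lieDerivative_add, neg_add])
    (fun f x => by
      rw [lieDerivative_smul, smul_mul_assoc, (hc f).mul_comm, parity_ι, smul_mul_assoc, smul_smul,
        Int.units_mul_self, one_smul, smul_neg]
      abel)
    (fun x => by simpa using ((𝓛.isGradedDerivation_lieDerivative x).hasParity ha).neg)
  exact ⟨D, hD, hD₀, hD₁⟩

namespace IsAd

variable {𝓛} {p q : ℤ} {a b : ExteriorAlgebra A L}
  {D D' : ExteriorAlgebra A L → ExteriorAlgebra A L}

theorem unique (h : 𝓛.IsAd p a D) (h' : 𝓛.IsAd p a D') : D = D' :=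
  funext <| h.isGradedDerivation.ext h'.isGradedDerivation
    (fun f => by rw [h.map_algebraMap, h'.map_algebraMap]) (fun x => by rw [h.map_ι, h'.map_ι])

theorem zero : 𝓛.IsAd p 0 (fun _ => 0) where
  isGradedDerivation := .zero
  map_algebraMap f := by rw [(𝓛.isGradedDerivation_contraction f).map_zero, smul_zero]
  map_ι x := by rw [(𝓛.isGradedDerivation_lieDerivative x).map_zero, neg_zero]

theorem add (h : 𝓛.IsAd p a D) (h' : 𝓛.IsAd p b D') :
    𝓛.IsAd p (a + b) (fun c => D c + D' c) where
  isGradedDerivation := h.isGradedDerivation.add h'.isGradedDerivation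
  map_algebraMap f := by
    rw [h.map_algebraMap, h'.map_algebraMap, (𝓛.isGradedDerivation_contraction f).map_add, smul_add]
  map_ι x := by
    rw [h.map_ι, h'.map_ι, (𝓛.isGradedDerivation_lieDerivative x).map_add, neg_add]

theorem ι (x : L) : 𝓛.IsAd 0 (ι A x) (𝓛.lieDerivative x) where
  isGradedDerivation := 𝓛.isGradedDerivation_lieDerivative x
  map_algebraMap f := by
    rw [contraction_ι, lieDerivative_algebraMap, sgnz_zero, one_smul]
  map_ι y := by rw [lieDerivative_ι, lieDerivative_ι, 𝓛.bracket_skew, map_neg]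

theorem algebraMap (f : A) : 𝓛.IsAd (-1) (algebraMap A _ f) (fun b => -𝓛.contraction f b) where
  isGradedDerivation := (𝓛.isGradedDerivation_contraction f).neg
  map_algebraMap g := by
    rw [contraction_algebraMap, contraction_algebraMap, smul_zero, neg_zero]
  map_ι x := by rw [contraction_ι, lieDerivative_algebraMap]

theorem ι_mul {x : L} (h : 𝓛.IsAd p a D) (ha : HasParity (p + 1) a) :
    𝓛.IsAd (p + 1) (ExteriorAlgebra.ι A x * a)
      (fun c => ExteriorAlgebra.ι A x * D c - sgnz p • (a * 𝓛.lieDerivative x c)) where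
  isGradedDerivation := by
    have h₁ := h.isGradedDerivation.mul_left (HasParity.ι x)
    have h₂ := (((𝓛.isGradedDerivation_lieDerivative x).mul_left ha).sgnz_smul p).neg
    rw [add_comm] at h₁
    rw [add_zero] at h₂
    simpa only [sub_eq_add_neg] using h₁.add h₂
  map_algebraMap f := by
    rw [h.map_algebraMap, lieDerivative_algebraMap, (𝓛.isGradedDerivation_contraction f).map_mul,
      contraction_ι, parity_ι, Algebra.commutes, sgnz_of_not_even (e := -1) (by decide),
      sgnz_add_one]
    simp [sub_eq_add_neg, add_comm, mul_smul_comm (sgnz p)]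
  map_ι y := by
    rw [h.map_ι, lieDerivative_ι, (𝓛.isGradedDerivation_lieDerivative y).map_mul, lieDerivative_ι,
      ha.mul_comm, parity_ι, parity_ι, sgnz_zero, one_smul, sgnz_add_one, 𝓛.bracket_skew x y]
    simp [sub_eq_add_neg, add_comm, smul_mul_assoc (sgnz p), smul_smul (sgnz p)]

/-- Graded skew-symmetry of the Schouten bracket. -/
theorem skew (h : 𝓛.IsAd p a D) (ha : HasParity (p + 1) a) {j : ℕ} (hb : b ∈ ⋀[A]^j L)
    (h' : 𝓛.IsAd (j - 1) b D') : D b = -(sgnz (p * (j - 1)) • D' a) := by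
  induction hb using Submodule.pow_induction_on_left' generalizing D' with
  | algebraMap f =>
    rw [h.map_algebraMap, h'.unique (D' := fun b => -𝓛.contraction f b)
      (by simpa using IsAd.algebraMap f), smul_neg, neg_neg]
    congr 1
    exact sgnz_eq_of_even_iff (by simp)
  | add x y i hx hy ihx ihy =>
    have exi {x : ExteriorAlgebra A L} (hx : x ∈ ⋀[A]^i L) :=
      𝓛.exists_isAd (p := i - 1) (a := x) (by simpa using HasParity.of_mem_exteriorPower hx)
    obtain ⟨Dx, hDx⟩ := exi hx
    obtain ⟨Dy, hDy⟩ := exi hy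
    rw [h.isGradedDerivation.map_add, ihx hDx, ihy hDy, h'.unique (hDx.add hDy), smul_add, neg_add]
  | mem_mul x hx i y hy ih =>
    obtain ⟨x, rfl⟩ := hx
    have hpy : HasParity ((i : ℤ) - 1 + 1) y := by simpa using HasParity.of_mem_exteriorPower hy
    obtain ⟨Dy, hDy⟩ := 𝓛.exists_isAd hpy
    rw [h'.unique (by simpa using hDy.ι_mul (x := x) hpy), h.isGradedDerivation.map_mul, h.map_ι,
      ih hDy, parity_ι, neg_mul, ((𝓛.isGradedDerivation_lieDerivative x).hasParity ha).mul_comm,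
      (HasParity.of_mem_exteriorPower hy).parity_eq]
    simp only [smul_sub, smul_mul_assoc, mul_smul_comm, smul_smul, mul_neg, neg_sub,
      ← sgnz_add]
    have h₁ : p * (((i.succ : ℕ) : ℤ) - 1) + (i - 1) = (0 + (p + 1)) * i - 1 := by
      push_cast; ring
    have h₂ : p * (((i.succ : ℕ) : ℤ) - 1) = p * (i - 1) + p := by push_cast; ring
    rw [h₁, h₂, sgnz_sub_one, Units.neg_smul]
    abel

theorem lieDerivative_apply (h : 𝓛.IsAd p a D) (x : L)
    (h' : 𝓛.IsAd p (𝓛.lieDerivative x a) D') (b : ExteriorAlgebra A L) :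
    D' b = 𝓛.lieDerivative x (D b) - D (𝓛.lieDerivative x b) := by
  have hc := (𝓛.isGradedDerivation_lieDerivative x).commutator h.isGradedDerivation
  simp only [zero_add, zero_mul, sgnz_zero, one_smul] at hc
  refine h'.isGradedDerivation.ext hc (fun f => ?_) (fun y => ?_) b
  · rw [h'.map_algebraMap, h.map_algebraMap, lieDerivative_algebraMap, h.map_algebraMap,
      (𝓛.isGradedDerivation_lieDerivative x).map_smul_sgnz, lieDerivative_contraction, smul_add,
      add_sub_cancel_right]
  · rw [h'.map_ι, h.map_ι, lieDerivative_ι, h.map_ι, lieDerivative_bracket,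
      (𝓛.isGradedDerivation_lieDerivative x).map_neg]
    abel

theorem contraction_apply (h : 𝓛.IsAd p a D) (f : A)
    (h' : 𝓛.IsAd (p - 1) (𝓛.contraction f a) D') (b : ExteriorAlgebra A L) :
    D' b = 𝓛.contraction f (D b) - sgnz p • D (𝓛.contraction f b) := by
  have hc := (𝓛.isGradedDerivation_contraction f).commutator h.isGradedDerivation
  rw [neg_add_eq_sub, sgnz_eq_of_even_iff (b := p) (by simp)] at hc
  refine h'.isGradedDerivation.ext hc (fun g => ?_) (fun y => ?_) b
  · rw [h'.map_algebraMap, h.map_algebraMap, contraction_algebraMap, h.isGradedDerivation.map_zero,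
      (𝓛.isGradedDerivation_contraction f).map_smul_sgnz, contraction_contraction, sgnz_sub_one,
      Units.neg_smul, smul_neg, neg_neg, smul_zero, sub_zero]
  · rw [h'.map_ι, h.map_ι, contraction_ι, h.map_algebraMap, lieDerivative_contraction,
      (𝓛.isGradedDerivation_contraction f).map_neg, smul_smul, Int.units_mul_self, one_smul]
    abel

/-- The graded Jacobi identity of the Schouten bracket. -/
theorem commutator (h : 𝓛.IsAd p a D) (ha : HasParity (p + 1) a) {j : ℕ} (hb : b ∈ ⋀[A]^j L)
    (h' : 𝓛.IsAd (j - 1) b D') :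
    𝓛.IsAd (p + (j - 1)) (D b) (fun c => D (D' c) - sgnz (p * (j - 1)) • D' (D c)) where
  isGradedDerivation := h.isGradedDerivation.commutator h'.isGradedDerivation
  map_algebraMap f := by
    have hc : HasParity (p - 1 + 1) (𝓛.contraction f a) := by
      convert (𝓛.isGradedDerivation_contraction f).hasParity ha using 1; ring
    obtain ⟨D'', hD''⟩ := 𝓛.exists_isAd hc
    have h₁ := hD''.skew hc hb h'
    have h₂ := h.contraction_apply f hD'' b
    rw [h₁, eq_sub_iff_add_eq] at h₂
    rw [h'.map_algebraMap, h.map_algebraMap, h.isGradedDerivation.map_smul_sgnz,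
      h'.isGradedDerivation.map_smul_sgnz, ← h₂, smul_add, smul_neg, smul_smul, smul_smul,
      smul_smul, ← sgnz_add, ← sgnz_add, ← sgnz_add, neg_add_eq_sub]
    congr 2
    · apply sgnz_eq_of_even_iff
      simp only [Int.even_add]
      tauto
    · apply sgnz_eq_of_even_iff
      simp only [Int.even_add, Int.even_sub, Int.even_mul, Int.not_even_one]
      tauto
  map_ι x := by
    have hl : HasParity (p + 1) (𝓛.lieDerivative x a) := by
      simpa using (𝓛.isGradedDerivation_lieDerivative x).hasParity ha
    obtain ⟨D'', hD''⟩ := 𝓛.exists_isAd hl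
    have h₁ := hD''.skew hl hb h'
    have h₂ := h.lieDerivative_apply x hD'' b
    rw [h'.map_ι, h.map_ι, h.isGradedDerivation.map_neg, h'.isGradedDerivation.map_neg, smul_neg,
      sub_neg_eq_add, ← neg_eq_iff_eq_neg.2 h₁, h₂]
    abel

theorem mem_exteriorPower (h : 𝓛.IsAd p a D) {i j : ℕ} (ha : a ∈ ⋀[A]^i L)
    (hb : b ∈ ⋀[A]^j L) : D b ∈ shiftedPower A L (i + j) := by
  refine h.isGradedDerivation.mem_shiftedPower (fun f => ?_) (fun x => ?_) hb
  · rw [h.map_algebraMap]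
    refine sgnz_smul_mem _ ?_
    simpa using (𝓛.isGradedDerivation_contraction f).mem_shiftedPower (m := 0)
      (fun g => by simp [contraction_algebraMap])
      (fun x => by simpa [contraction_ι] using algebraMap_mem_shiftedPower _) ha
  · rw [h.map_ι, add_comm]
    refine neg_mem <| (𝓛.isGradedDerivation_lieDerivative x).mem_shiftedPower
      (fun g => by simpa [lieDerivative_algebraMap] using algebraMap_mem_shiftedPower _)
      (fun x => by simp [lieDerivative_ι, shiftedPower]) ha

end IsAd

theorem exists_isAd_of_mem {i : ℕ} {a : ExteriorAlgebra A L} (ha : a ∈ ⋀[A]^i L) :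
    ∃ D, 𝓛.IsAd (i - 1) a D :=
  𝓛.exists_isAd (by simpa using HasParity.of_mem_exteriorPower ha)

/-- The Schouten–Nijenhuis bracket on the exterior algebra. -/
noncomputable def schouten :
    ExteriorAlgebra A L →+ ExteriorAlgebra A L → ExteriorAlgebra A L :=
  (DirectSum.toAddMonoid fun i : ℕ => AddMonoidHom.mk'
    (fun a : ⋀[A]^i L => (𝓛.exists_isAd_of_mem a.2).choose) fun a b =>
      (𝓛.exists_isAd_of_mem (a + b).2).choose_spec.unique
        ((𝓛.exists_isAd_of_mem a.2).choose_spec.add (𝓛.exists_isAd_of_mem b.2).choose_spec)).comp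
  (DirectSum.decomposeAddEquiv fun i : ℕ => ⋀[A]^i L).toAddMonoidHom

theorem isAd_schouten {i : ℕ} {a : ExteriorAlgebra A L} (ha : a ∈ ⋀[A]^i L) :
    𝓛.IsAd (i - 1) a (𝓛.schouten a) := by
  have : 𝓛.schouten a = (𝓛.exists_isAd_of_mem ha).choose := by
    change DirectSum.toAddMonoid _ (DirectSum.decompose (fun i : ℕ => ⋀[A]^i L) a) = _
    rw [DirectSum.decompose_of_mem (ℳ := fun i : ℕ => ⋀[A]^i L) ha, DirectSum.toAddMonoid_of]
    rfl
  exact this ▸ (𝓛.exists_isAd_of_mem ha).choose_spec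

theorem schouten_ι (x : L) : 𝓛.schouten (ι A x) = 𝓛.lieDerivative x :=
  (𝓛.isAd_schouten (i := 1) (by simp)).unique (by simpa using IsAd.ι x)

theorem schouten_add_right (a b c : ExteriorAlgebra A L) :
    𝓛.schouten a (b + c) = 𝓛.schouten a b + 𝓛.schouten a c := by
  induction a using DirectSum.Decomposition.inductionOn (fun i : ℕ => ⋀[A]^i L) with
  | zero => simp
  | homogeneous a => exact (𝓛.isAd_schouten a.2).isGradedDerivation.map_add b c
  | add a a' h h' => simp only [map_add, Pi.add_apply, h, h']; abel

theorem schouten_mem {i j : ℕ} {a b : ExteriorAlgebra A L} (ha : a ∈ ⋀[A]^i L)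
    (hb : b ∈ ⋀[A]^j L) : 𝓛.schouten a b ∈ shiftedPower A L (i + j) :=
  (𝓛.isAd_schouten ha).mem_exteriorPower ha hb

theorem schouten_jacobi {i j : ℕ} {a b : ExteriorAlgebra A L} (ha : a ∈ ⋀[A]^i L)
    (hb : b ∈ ⋀[A]^j L) (c : ExteriorAlgebra A L) :
    𝓛.schouten (𝓛.schouten a b) c = 𝓛.schouten a (𝓛.schouten b c) -
      sgnz (((i : ℤ) - 1) * ((j : ℤ) - 1)) • 𝓛.schouten b (𝓛.schouten a c) := by
  have h := (𝓛.isAd_schouten ha).commutator (by simpa using HasParity.of_mem_exteriorPower ha) hb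
    (𝓛.isAd_schouten hb)
  have hab := 𝓛.schouten_mem ha hb
  rcases hn : i + j with _ | n
  · rw [hn] at hab
    rw [(Submodule.mem_bot A).1 hab] at h ⊢
    rw [map_zero]
    exact congrFun (IsAd.zero.unique h) c
  · rw [hn] at hab
    have hp : (i : ℤ) - 1 + (j - 1) = n - 1 := by omega
    rw [hp] at h
    exact congrFun ((𝓛.isAd_schouten hab).unique h) c

end LieRinehart

/-- for a `(K, A)`-Lie-Rinehart algebra `L`, the exterior algebra `∧•_A L`,
equipped with the wedge product and the generalized Schouten–Nijenhuis bracket (extending the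
Lie bracket of `L` and the anchor action on `A`), is a Gerstenhaber algebra over `A`. -/
theorem exteriorAlgebra_schouten_gerstenhaber
    (K A L : Type u) [Field K] [CommRing A] [Algebra K A]
    [AddCommGroup L] [Module A L] (𝓛 : LieRinehart K A L) :
    Nonempty (SchoutenBracket 𝓛) := by
  refine ⟨⟨fun a => 𝓛.schouten a, fun x y z => by rw [map_add, Pi.add_apply],
    𝓛.schouten_add_right, fun i j x y hx hy => ExteriorAlgebra.shiftedPower_le _ <|
      𝓛.schouten_mem hx hy, fun x y => ?_, fun x f => ?_, fun i j a b c ha hb => ?_,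
    fun i j a b ha hb => ?_, fun i j a b c ha hb => ?_⟩⟩
  · rw [𝓛.schouten_ι, 𝓛.lieDerivative_ι]
  · rw [𝓛.schouten_ι, 𝓛.lieDerivative_algebraMap]
  · rw [(𝓛.isAd_schouten ha).isGradedDerivation.map_mul,
      (ExteriorAlgebra.HasParity.of_mem_exteriorPower hb).parity_eq, smul_mul_assoc]
  · exact (𝓛.isAd_schouten ha).skew
      (by simpa using ExteriorAlgebra.HasParity.of_mem_exteriorPower ha) hb (𝓛.isAd_schouten hb)
  · rw [𝓛.schouten_jacobi ha hb, sub_add_cancel]
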